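/- Distinct canonical forms represent distinct operators: if two canonical forms (p, (s₁,…,s_k), c) and (p′, (s′₁,…,s′_m), c′) have equal products in GL(3,ℂ), then p = p′, k = m, sᵢ = s′ᵢ for all i, and c = c′. -/

import Mathlib

open Matrix Complex

noncomputable section

/-- ω = exp(2πi/3), a primitive third root of unity. -/
def ω : ℂ := exp (2 * Real.pi * I / 3)

/-- ζ = exp(2πi/9), a primitive ninth root of unity. -/
def ζ : ℂ := exp (2 * Real.pi * I / 9)

/-- The qutrit Pauli X matrix. -/
def Xmat : Matrix (Fin 3) (Fin 3) ℂ := !![0,0,1; 1,0,0; 0,1,0]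

/-- The qutrit Pauli Z matrix. -/
def Zmat : Matrix (Fin 3) (Fin 3) ℂ := !![1,0,0; 0,ω,0; 0,0,ω^2]

/-- The qutrit Hadamard matrix H = (1/(i√3))·[[1,1,1],[1,ω,ω²],[1,ω²,ω]]. -/
def Hmat : Matrix (Fin 3) (Fin 3) ℂ :=
  (I * (Real.sqrt 3 : ℂ))⁻¹ • !![1,1,1; 1,ω,ω^2; 1,ω^2,ω]

/-- The qutrit phase matrix S = ζ⁸·diag(1,1,ω). -/
def Smat : Matrix (Fin 3) (Fin 3) ℂ := ζ^8 • !![1,0,0; 0,1,0; 0,0,ω]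

/-- The qutrit T matrix T = diag(1,ζ,ζ⁸). -/
def Tmat : Matrix (Fin 3) (Fin 3) ℂ := !![1,0,0; 0,ζ,0; 0,0,ζ^8]

lemma omega_ne_zero : ω ≠ 0 := Complex.exp_ne_zero _
lemma zeta_ne_zero : ζ ≠ 0 := Complex.exp_ne_zero _

lemma omega_im_pos : 0 < ω.im := by
  have h : ω = Complex.exp ((2 * Real.pi / 3 : ℝ) * I) := by
    rw [ω]; push_cast; ring_nf
  rw [h, Complex.exp_ofReal_mul_I_im]
  apply Real.sin_pos_of_pos_of_lt_pi
  · positivity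
  · nlinarith [Real.pi_pos]

lemma omega_ne_one : ω ≠ 1 := by
  intro h
  have := omega_im_pos
  rw [h] at this
  simp at this

lemma omega_cube : ω ^ 3 = 1 := by
  rw [ω, ← Complex.exp_nat_mul]
  rw [show (3:ℕ) * (2 * Real.pi * I / 3) = 2 * Real.pi * I by push_cast; ring]
  exact Complex.exp_two_pi_mul_I

lemma detX : Xmat.det ≠ 0 := by
  simp [Xmat, Matrix.det_fin_three]

lemma detZ : Zmat.det ≠ 0 := by
  simp [Zmat, Matrix.det_fin_three, omega_ne_zero]

lemma detS : Smat.det ≠ 0 := by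
  simp [Smat, Matrix.det_fin_three, omega_ne_zero, zeta_ne_zero]

lemma detT : Tmat.det ≠ 0 := by
  simp [Tmat, Matrix.det_fin_three, zeta_ne_zero]

lemma detH : Hmat.det ≠ 0 := by
  rw [Hmat, Matrix.det_smul]
  apply mul_ne_zero
  · apply pow_ne_zero
    apply inv_ne_zero
    apply mul_ne_zero Complex.I_ne_zero
    simp [Complex.ofReal_ne_zero]
  · rw [Matrix.det_fin_three]
    simp [Matrix.vecHead, Matrix.vecTail]
    intro h
    have h3 : ω ^ 3 = 1 := omega_cube
    have key : 3 * ω * (ω - 1) = 0 := by linear_combination h + ω * h3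
    rcases mul_eq_zero.mp key with h' | h'
    · rcases mul_eq_zero.mp h' with h'' | h''
      · norm_num at h''
      · exact omega_ne_zero h''
    · exact omega_ne_one (by linear_combination h')

/-- X as an element of GL(3, ℂ). -/
def Xg : GL (Fin 3) ℂ := Matrix.GeneralLinearGroup.mkOfDetNeZero Xmat detX

/-- Z as an element of GL(3, ℂ). -/
def Zg : GL (Fin 3) ℂ := Matrix.GeneralLinearGroup.mkOfDetNeZero Zmat detZ

/-- H as an element of GL(3, ℂ). -/
def Hg : GL (Fin 3) ℂ := Matrix.GeneralLinearGroup.mkOfDetNeZero Hmat detH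

/-- S as an element of GL(3, ℂ). -/
def Sg : GL (Fin 3) ℂ := Matrix.GeneralLinearGroup.mkOfDetNeZero Smat detS

/-- T as an element of GL(3, ℂ). -/
def Tg : GL (Fin 3) ℂ := Matrix.GeneralLinearGroup.mkOfDetNeZero Tmat detT

/-- The Clifford group 𝒞: the subgroup of GL(3,ℂ) generated by H and S. -/
def Cliff : Subgroup (GL (Fin 3) ℂ) := Subgroup.closure {Hg, Sg}

/-- The Clifford+T group: the subgroup of GL(3,ℂ) generated by H, S and T. -/
def CliffT : Subgroup (GL (Fin 3) ℂ) := Subgroup.closure {Hg, Sg, Tg}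

/-- The subgroup 𝒮 of GL(3,ℂ) generated by S and X. -/
def Sgrp : Subgroup (GL (Fin 3) ℂ) := Subgroup.closure {Sg, Xg}

/-- Letters of words over the alphabet {H, S, T}. -/
inductive Letter : Type
  | H : Letter
  | S : Letter
  | T : Letter
  deriving DecidableEq

/-- The gate associated to a letter. -/
def Letter.g : Letter → GL (Fin 3) ℂ
  | .H => Hg
  | .S => Sg
  | .T => Tg

/-- The product of the letters of a word. -/
def wordProd (w : List Letter) : GL (Fin 3) ℂ := (w.map Letter.g).prod

/-- The allowed prefixes of a canonical form: ε, T, H²T. -/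
def Prefixes : Set (List Letter) := {[], [.T], [.H, .H, .T]}

/-- The allowed syllables of a canonical form: HT, H³T, SHT, SH³T, S²HT, S²H³T. -/
def Syllables : Set (List Letter) :=
  {[.H, .T], [.H, .H, .H, .T], [.S, .H, .T],
   [.S, .H, .H, .H, .T], [.S, .S, .H, .T], [.S, .S, .H, .H, .H, .T]}

/-- The T-count of a canonical form with prefix `p` and syllable list `ss`:
`k` if the prefix is empty and `k+1` otherwise, where `k` is the number of syllables. -/
def TCount (p : List Letter) (ss : List (List Letter)) : ℕ :=
  ss.length + (if p = [] then 0 else 1)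

/-- P₊ = (P + P²)/√6. -/
def Pplus (P : Matrix (Fin 3) (Fin 3) ℂ) : Matrix (Fin 3) (Fin 3) ℂ :=
  ((Real.sqrt 6 : ℂ))⁻¹ • (P + P ^ 2)

/-- P₋ = i(P − P²)/√6. -/
def Pminus (P : Matrix (Fin 3) (Fin 3) ℂ) : Matrix (Fin 3) (Fin 3) ℂ :=
  (I * ((Real.sqrt 6 : ℂ))⁻¹) • (P - P ^ 2)

/-- The ordered tuple (Q₁, …, Q₈) = (Z₊, X₊, (XZ)₊, (XZ²)₊, Z₋, X₋, (XZ)₋, (XZ²)₋). -/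
def Q : Fin 8 → Matrix (Fin 3) (Fin 3) ℂ :=
  ![Pplus Zmat, Pplus Xmat, Pplus (Xmat * Zmat), Pplus (Xmat * Zmat ^ 2),
    Pminus Zmat, Pminus Xmat, Pminus (Xmat * Zmat), Pminus (Xmat * Zmat ^ 2)]

/-- The adjoint representation Û of U, the 8×8 real matrix with
entries Û_{ij} = tr(Qᵢ U Qⱼ U†). -/
def adj (U : Matrix (Fin 3) (Fin 3) ℂ) : Matrix (Fin 8) (Fin 8) ℝ :=
  Matrix.of fun i j => (Matrix.trace (Q i * U * Q j * Uᴴ)).re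

/-- The top-left 4×4 quadrant Û₊₊. -/
def blockPP (A : Matrix (Fin 8) (Fin 8) ℝ) : Matrix (Fin 4) (Fin 4) ℝ :=
  Matrix.of fun i j => A ⟨i.val, by omega⟩ ⟨j.val, by omega⟩

/-- The top-right 4×4 quadrant Û₊₋. -/
def blockPM (A : Matrix (Fin 8) (Fin 8) ℝ) : Matrix (Fin 4) (Fin 4) ℝ :=
  Matrix.of fun i j => A ⟨i.val, by omega⟩ ⟨j.val + 4, by omega⟩

/-- The bottom-left 4×4 quadrant Û₋₊. -/
def blockMP (A : Matrix (Fin 8) (Fin 8) ℝ) : Matrix (Fin 4) (Fin 4) ℝ :=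
  Matrix.of fun i j => A ⟨i.val + 4, by omega⟩ ⟨j.val, by omega⟩

/-- The bottom-right 4×4 quadrant Û₋₋. -/
def blockMM (A : Matrix (Fin 8) (Fin 8) ℝ) : Matrix (Fin 4) (Fin 4) ℝ :=
  Matrix.of fun i j => A ⟨i.val + 4, by omega⟩ ⟨j.val + 4, by omega⟩

/-- α = sin(2π/9). -/
def αR : ℝ := Real.sin (2 * Real.pi / 9)

/-- The ring ℤ[α]: the subring of ℝ generated by 1/2 and α. -/
def Zα : Subring ℝ := Subring.closure {1/2, αR}

/-- The ring ℤ[1/2, 1/α]: the subring of ℝ generated by 1/2, α and α⁻¹. -/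
def Zhα : Subring ℝ := Subring.closure {1/2, αR, αR⁻¹}

lemma alpha_mem_Zα : αR ∈ Zα := Subring.subset_closure (by simp)

open Polynomial in
/-- Evaluation of integer polynomials at ζ. -/
def evz : ℤ[X] →+* ℂ := Polynomial.eval₂RingHom (Int.castRingHom ℂ) ζ

open Polynomial in
/-- Evaluation of integer polynomials at 1, modulo 3. -/
def evr : ℤ[X] →+* ZMod 3 := Polynomial.eval₂RingHom (Int.castRingHom (ZMod 3)) 1

lemma zeta_prim : IsPrimitiveRoot ζ 9 := by
  have := Complex.isPrimitiveRoot_exp 9 (by norm_num)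
  simpa [ζ] using this

open Polynomial in
lemma evr_eq_zero (p : ℤ[X]) (h : evz p = 0) : evr p = 0 := by
  have h1 : aeval ζ p = 0 := by
    simpa [evz, aeval_def] using h
  have hint : IsIntegral ℤ ζ := zeta_prim.isIntegral (by norm_num)
  have hd := minpoly.isIntegrallyClosed_dvd hint h1
  rw [← cyclotomic_eq_minpoly zeta_prim (by norm_num)] at hd
  obtain ⟨q, rfl⟩ := hd
  have h3 : Fact (Nat.Prime 3) := ⟨by norm_num⟩
  have h9 : evr (cyclotomic 9 ℤ) = 0 := by
    have := eval_one_cyclotomic_prime_pow (R := ZMod 3) (p := 3) 1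
    have e : evr (cyclotomic 9 ℤ) = eval 1 (cyclotomic (3^(1+1)) (ZMod 3)) := by
      rw [← map_cyclotomic_int (3^(1+1)) (ZMod 3), eval_map]; rfl
    rw [e, this]; rfl
  rw [map_mul, h9, zero_mul]

lemma omega_eq : ω = ζ ^ 3 := by
  rw [ω, ζ, ← Complex.exp_nat_mul]; congr 1; push_cast; ring

lemma zeta_rel : ζ ^ 6 + ζ ^ 3 + 1 = 0 := by
  have h := omega_cube
  have h2 : (ω - 1) * (ω ^ 2 + ω + 1) = 0 := by linear_combination h
  rcases mul_eq_zero.mp h2 with h3 | h3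
  · exact absurd (by linear_combination h3) omega_ne_one
  · rw [omega_eq] at h3; linear_combination h3

lemma chi_ne_zero : (1 - ζ : ℂ) ≠ 0 := by
  intro h
  have h1 : ζ = 1 := by linear_combination -h
  have := zeta_rel
  rw [h1] at this; norm_num at this

lemma sqrt_rel : I * (Real.sqrt 3 : ℂ) = 1 + 2 * ζ ^ 3 := by
  rw [← omega_eq]
  have h : ω = Complex.exp ((2 * Real.pi / 3 : ℝ) * I) := by
    rw [ω]; push_cast; ring_nf
  have e : (2 * Real.pi / 3 : ℝ) = Real.pi - Real.pi / 3 := by ring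
  apply Complex.ext
  · simp only [Complex.add_re, h, Complex.mul_re, Complex.exp_ofReal_mul_I_re]
    rw [e, Real.cos_pi_sub]; simp
  · simp only [Complex.add_im, h, Complex.mul_im, Complex.exp_ofReal_mul_I_im]
    rw [e, Real.sin_pi_sub]; simp; ring

lemma inv_rel : (I * (Real.sqrt 3 : ℂ))⁻¹ = -(1 + 2 * ζ ^ 3) / 3 := by
  rw [sqrt_rel]
  symm
  apply eq_inv_of_mul_eq_one_left
  linear_combination (-4/3 : ℂ) * zeta_rel

/-- The basis matrix of the Clifford-stable lattice. -/
def Bm : Matrix (Fin 3) (Fin 3) ℂ :=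
  !![1, 0, 0; 1, (1 - ζ)^2, 0; 1, -(1 - ζ)^2, (1 - ζ)^3]

lemma Bm_unit : IsUnit Bm := by
  rw [Matrix.isUnit_iff_isUnit_det, isUnit_iff_ne_zero]
  simp [Bm, Matrix.det_fin_three, chi_ne_zero]

open Polynomial in
/-- `LRep n W r`: in the lattice basis, `(1-ζ)^n W` is integral with residue `r`. -/
def LRep (n : ℕ) (W : Matrix (Fin 3) (Fin 3) ℂ) (r : Matrix (Fin 3) (Fin 3) (ZMod 3)) : Prop :=
  ∃ P : Matrix (Fin 3) (Fin 3) ℤ[X],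
    Bm * evz.mapMatrix P = (1 - ζ)^n • (W * Bm) ∧ evr.mapMatrix P = r

lemma LRep.mul {n m W V r s} (h : LRep n W r) (h' : LRep m V s) : LRep (n + m) (W * V) (r * s) := by
  obtain ⟨P, h1, rfl⟩ := h
  obtain ⟨Q, h2, rfl⟩ := h'
  refine ⟨P * Q, ?_, map_mul _ _ _⟩
  rw [map_mul, ← mul_assoc, h1, Matrix.smul_mul, mul_assoc, h2, Matrix.mul_smul, smul_smul,
    pow_add, mul_assoc]

lemma LRep.one : LRep 0 1 1 := ⟨1, by simp, by simp⟩

lemma LRep.unique {n W r s} (h : LRep n W r) (h' : LRep n W s) : r = s := by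
  obtain ⟨P, h1, rfl⟩ := h
  obtain ⟨Q, h2, rfl⟩ := h'
  have h3 := Bm_unit.mul_left_cancel (h1.trans h2.symm)
  ext i j
  have h4 := congrFun (congrFun h3 i) j
  simp only [RingHom.mapMatrix_apply, Matrix.map_apply] at h4 ⊢
  have := evr_eq_zero (P i j - Q i j) (by rw [map_sub, h4, sub_self])
  rwa [map_sub, sub_eq_zero] at this

open Polynomial in
lemma LRep.add {n W r} (h : LRep n W r) (k : ℕ) : LRep (n + (k + 1)) W 0 := by
  obtain ⟨P, h1, rfl⟩ := h
  refine ⟨(1 - X : ℤ[X])^(k+1) • P, ?_, ?_⟩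
  · have : evz.mapMatrix ((1 - X : ℤ[X])^(k+1) • P) = (1 - ζ)^(k+1) • evz.mapMatrix P := by
      have hx : evz ((1 - X : ℤ[X])^(k+1)) = (1 - ζ)^(k+1) := by
        rw [map_pow, map_sub, map_one]; simp [evz]
      ext i j
      simp only [RingHom.mapMatrix_apply, Matrix.map_apply, Matrix.smul_apply, smul_eq_mul,
        map_mul, hx]
    rw [this, Matrix.mul_smul, h1, smul_smul, ← pow_add, add_comm]
  · ext i j; simp [evr]

lemma LRep.lt {n m W r s} (h : LRep n W r) (h' : LRep m W s) (hs : s ≠ 0) : m ≤ n := by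
  by_contra hlt
  obtain ⟨k, hk⟩ := Nat.exists_eq_add_of_lt (not_le.mp hlt)
  have := h.add k
  rw [← add_assoc, ← hk] at this
  exact hs (h'.unique this)

/-- Residues of the generators. -/
def res : Letter → Matrix (Fin 3) (Fin 3) (ZMod 3)
  | .H => !![0,0,1; 0,1,0; 2,0,0]
  | .S => !![1,0,0; 0,1,0; 2,0,1]
  | .T => !![0,0,0; 2,0,0; 1,0,0]

/-- Pole orders of the generators. -/
def pol : Letter → ℕ
  | .H => 0
  | .S => 0
  | .T => 1

open Polynomial in
lemma rep_H : LRep 0 Hmat (res .H) := by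
  refine ⟨!![-1 + (-2)*X^3, 0, -1 + X + (-1)*X^2 + (-1)*X^3 + (2)*X^4 + (-2)*X^5;
    -1 + (-1)*X + (-1)*X^2 + (-1)*X^3 + X^5, 1, X^3 + (-1)*X^4;
    (-2)*X + (-4)*X^2 + (-4)*X^3 + (-4)*X^4 + (-2)*X^5, 0, 1 + (2)*X^3], ?_, ?_⟩
  · have h := zeta_rel
    rw [Hmat, inv_rel, omega_eq]
    ext i j
    fin_cases i <;> fin_cases j <;>
      simp [Bm, evz, Matrix.mul_apply, Fin.sum_univ_three] <;> grind
  · ext i j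
    fin_cases i <;> fin_cases j <;> simp [evr, res] <;> decide

open Polynomial in
lemma rep_S : LRep 0 Smat (res .S) := by
  refine ⟨!![(-1)*X^2 + (-1)*X^5, 0, 0;
    0, (-1)*X^2 + (-1)*X^5, 0;
    1 + (-1)*X + (-2)*X^2 + (-1)*X^3 + (-2)*X^4 + (-2)*X^5, 1 + X + (-1)*X^2 + (-1)*X^5, X^2],
    ?_, ?_⟩
  · have h := zeta_rel
    rw [Smat, omega_eq]
    ext i j
    fin_cases i <;> fin_cases j <;>
      simp [Bm, evz, Matrix.mul_apply, Fin.sum_univ_three] <;> grind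
  · ext i j
    fin_cases i <;> fin_cases j <;> simp [evr, res] <;> decide

open Polynomial in
lemma rep_T : LRep 1 Tmat (res .T) := by
  refine ⟨!![1 + (-1)*X, 0, 0;
    -1, X + (-1)*X^2, 0;
    (-1)*X^2 + (-1)*X^5, X + X^2 + X^5, -1 + (-1)*X^2 + (-1)*X^5], ?_, ?_⟩
  · have h := zeta_rel
    rw [Tmat]
    ext i j
    fin_cases i <;> fin_cases j <;>
      simp [Bm, evz, Matrix.mul_apply, Fin.sum_univ_three] <;> grind
  · ext i j
    fin_cases i <;> fin_cases j <;> simp [evr, res] <;> decide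

lemma rep_letter (a : Letter) : LRep (pol a) (a.g : Matrix (Fin 3) (Fin 3) ℂ) (res a) := by
  cases a
  · exact rep_H
  · exact rep_S
  · exact rep_T

/-- Residue of a word. -/
def resW (w : List Letter) : Matrix (Fin 3) (Fin 3) (ZMod 3) := (w.map res).prod

lemma rep_word (w : List Letter) :
    LRep (w.map pol).sum (wordProd w : GL (Fin 3) ℂ).1 (resW w) := by
  induction w with
  | nil => exact LRep.one
  | cons a w ih =>
    have := (rep_letter a).mul ih
    simpa [wordProd, resW] using this

lemma wordProd_append (v w : List Letter) : wordProd (v ++ w) = wordProd v * wordProd w := by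
  simp [wordProd]

lemma Hg_pow : Hg ^ 4 = 1 := by
  have h := zeta_rel
  apply Units.ext
  change Hmat ^ 4 = 1
  have h2 : Hmat ^ 2 = !![-1,0,0; 0,0,-1; 0,-1,0] := by
    rw [pow_two, Hmat, inv_rel, omega_eq]
    ext i j
    fin_cases i <;> fin_cases j <;> simp [Matrix.mul_apply, Fin.sum_univ_three] <;> grind
  rw [show 4 = 2 * 2 from rfl, pow_mul, h2, pow_two]
  ext i j
  fin_cases i <;> fin_cases j <;> simp [Matrix.mul_apply, Fin.sum_univ_three]

lemma Sg_pow : Sg ^ 9 = 1 := by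
  have h : ζ ^ 9 = 1 := zeta_prim.pow_eq_one
  apply Units.ext
  change Smat ^ 9 = 1
  have : Smat = Matrix.diagonal ![ζ^8, ζ^8, ζ^8 * ζ^3] := by
    rw [Smat, omega_eq]
    ext i j
    fin_cases i <;> fin_cases j <;> simp
  rw [this, Matrix.diagonal_pow, ← Matrix.diagonal_one]
  congr 1
  have h8 : (ζ ^ 8) ^ 9 = 1 := by rw [← pow_mul, mul_comm, pow_mul, h, one_pow]
  have h3 : (ζ ^ 3) ^ 9 = 1 := by rw [← pow_mul, mul_comm, pow_mul, h, one_pow]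
  ext i
  fin_cases i <;> simp [mul_pow, h8, h3]

/-- Every Clifford is a word in H, S. -/
lemma cliff_word (c : GL (Fin 3) ℂ) (hc : c ∈ Cliff) :
    ∃ w : List Letter, Letter.T ∉ w ∧ wordProd w = c := by
  have hpow : ∀ (w : List Letter) (n : ℕ), Letter.T ∉ w →
      ∃ w' : List Letter, Letter.T ∉ w' ∧ wordProd w' = wordProd w ^ n := by
    intro w n hw
    induction n with
    | zero => exact ⟨[], by simp, by simp [wordProd]⟩
    | succ n ih =>
      obtain ⟨v, h1, h2⟩ := ih
      exact ⟨v ++ w, by simp [h1, hw], by rw [wordProd_append, h2, pow_succ]⟩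
  have hH : wordProd [.H] = Hg := by simp [wordProd, Letter.g]
  have hS : wordProd [.S] = Sg := by simp [wordProd, Letter.g]
  refine Subgroup.closure_induction'' (p := fun c _ => ∃ w : List Letter,
    Letter.T ∉ w ∧ wordProd w = c) ?_ ?_ ?_ ?_ hc
  · rintro x (rfl | rfl)
    · exact ⟨[.H], by simp, hH⟩
    · exact ⟨[.S], by simp, hS⟩
  · rintro x (rfl | rfl)
    · obtain ⟨w, h1, h2⟩ := hpow [.H] 3 (by simp)
      refine ⟨w, h1, ?_⟩
      rw [h2, hH]
      exact eq_inv_of_mul_eq_one_left (by rw [← pow_succ]; exact Hg_pow)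
    · obtain ⟨w, h1, h2⟩ := hpow [.S] 8 (by simp)
      refine ⟨w, h1, ?_⟩
      rw [h2, hS]
      exact eq_inv_of_mul_eq_one_left (by rw [← pow_succ]; exact Sg_pow)
  · exact ⟨[], by simp, by simp [wordProd]⟩
  · rintro x y _ _ ⟨v, h1, rfl⟩ ⟨w, h2, rfl⟩
    exact ⟨v ++ w, by simp [h1, h2], wordProd_append v w⟩

lemma rep_cliff (c : GL (Fin 3) ℂ) (hc : c ∈ Cliff) :
    ∃ r, LRep 0 c.1 r ∧ IsUnit r := by
  have key : ∀ c ∈ Cliff, ∃ r, LRep 0 c.1 r := by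
    intro c hc
    obtain ⟨w, h1, rfl⟩ := cliff_word c hc
    have := rep_word w
    have h0 : (w.map pol).sum = 0 := by
      rw [List.sum_eq_zero_iff]
      intro x hx
      obtain ⟨a, ha, rfl⟩ := List.mem_map.mp hx
      cases a
      · rfl
      · rfl
      · exact absurd ha h1
    rw [h0] at this
    exact ⟨_, this⟩
  obtain ⟨r, hr⟩ := key c hc
  obtain ⟨s, hs⟩ := key c⁻¹ (inv_mem hc)
  refine ⟨r, hr, ?_⟩
  have h1 := hr.mul hs
  have h2 : c.1 * (c⁻¹).1 = 1 := by rw [← Units.val_mul]; simp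
  rw [h2] at h1
  exact IsUnit.of_mul_eq_one _ (h1.unique LRep.one)

/-- Blocks: nonempty prefixes and syllables. -/
def blocks : List (List Letter) :=
  [[.T], [.H, .H, .T], [.H, .T], [.H, .H, .H, .T], [.S, .H, .T],
   [.S, .H, .H, .H, .T], [.S, .S, .H, .T], [.S, .S, .H, .H, .H, .T]]

/-- The syllables as a list. -/
def sylls : List (List Letter) :=
  [[.H, .T], [.H, .H, .H, .T], [.S, .H, .T],
   [.S, .H, .H, .H, .T], [.S, .S, .H, .T], [.S, .S, .H, .H, .H, .T]]

lemma mem_sylls (s : List Letter) : s ∈ Syllables ↔ s ∈ sylls := by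
  simp [Syllables, sylls]

/-- Direction of the residue of a block. -/
def lead (s : List Letter) : Fin 3 → ZMod 3 := fun i => resW s i 0

lemma blocks_pol : ∀ s ∈ blocks, (s.map pol).sum = 1 := by decide

/-- Entries of the residue of a word. -/
def resE (s : List Letter) (i j : Fin 3) : ZMod 3 := resW s i j

lemma blocks_res : ∀ s ∈ blocks, resW s = Matrix.vecMulVec (lead s) ![1,0,0] := by
  have : ∀ s ∈ blocks, ∀ i j : Fin 3, resE s i j =
      lead s i * (![1,0,0] : Fin 3 → ZMod 3) j := by decide
  intro s hs
  ext i j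
  exact this s hs i j

lemma sylls_lead : ∀ s ∈ sylls, lead s 0 ≠ 0 := by decide

lemma sylls_sub : ∀ s ∈ sylls, s ∈ blocks := by decide

lemma blocks_lead_ne : ∀ s ∈ blocks, ∃ i, lead s i ≠ 0 := by decide

lemma blocks_lead_inj : ∀ s ∈ blocks, ∀ t ∈ blocks, ∀ k l : ZMod 3, k ≠ 0 →
    (∀ i, lead s i * k = lead t i * l) → s = t := by decide

lemma rep_form (ss : List (List Letter)) : ∀ (s : List Letter), s ∈ blocks →
    (∀ t ∈ ss, t ∈ sylls) → ∀ c ∈ Cliff,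
    ∃ w : Fin 3 → ZMod 3, w ≠ 0 ∧
      LRep (ss.length + 1) (wordProd ((s :: ss).flatten) * c).1 (Matrix.vecMulVec (lead s) w) := by
  induction ss with
  | nil =>
    intro s hs _ c hc
    obtain ⟨r, hr, hu⟩ := rep_cliff c hc
    have h := (rep_word s).mul hr
    rw [blocks_pol s hs, blocks_res s hs, Matrix.vecMulVec_mul] at h
    refine ⟨![1,0,0] ᵥ* r, ?_, by simpa using h⟩
    intro h0
    have h1 : ![1,0,0] ᵥ* r = (0 : Fin 3 → ZMod 3) ᵥ* r := by simpa using h0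
    have h2 := Matrix.vecMul_injective_of_isUnit hu h1
    exact absurd (congrFun h2 0) (by decide)
  | cons t ss ih =>
    intro s hs hss c hc
    have ht := hss t (by simp)
    obtain ⟨w, hw, hrep⟩ := ih t (sylls_sub t ht) (fun x hx => hss x (by simp [hx])) c hc
    have h := (rep_word s).mul hrep
    rw [blocks_pol s hs, blocks_res s hs, Matrix.vecMulVec_mul_vecMulVec] at h
    refine ⟨(![1,0,0] ⬝ᵥ lead t) • w, ?_, ?_⟩
    · have : ![1,0,0] ⬝ᵥ lead t = lead t 0 := by
        simp [dotProduct, Fin.sum_univ_three]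
      rw [this]
      have h3 : Fact (Nat.Prime 3) := ⟨by norm_num⟩
      exact smul_ne_zero (sylls_lead t ht) hw
    · have e : (wordProd ((s :: t :: ss).flatten) * c).1
          = (wordProd s).1 * (wordProd ((t :: ss).flatten) * c).1 := by
        rw [List.flatten_cons, wordProd_append, mul_assoc]; rfl
      rw [e, List.length_cons, add_comm]
      exact h

lemma vec_ne {s : List Letter} (hs : s ∈ blocks) {w : Fin 3 → ZMod 3} (hw : w ≠ 0) :
    Matrix.vecMulVec (lead s) w ≠ 0 := by
  intro h
  obtain ⟨i, hi⟩ := blocks_lead_ne s hs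
  apply hw
  ext j
  have h3 : Fact (Nat.Prime 3) := ⟨by norm_num⟩
  have := congrFun (congrFun h i) j
  simpa [Matrix.vecMulVec_apply, hi] using this

lemma nil_cons {s : List Letter} {ss : List (List Letter)} (hs : s ∈ blocks)
    (hss : ∀ t ∈ ss, t ∈ sylls) {c c' : GL (Fin 3) ℂ} (hc : c ∈ Cliff) (hc' : c' ∈ Cliff)
    (h : wordProd (([] : List (List Letter)).flatten) * c = wordProd ((s :: ss).flatten) * c') :
    False := by
  obtain ⟨w, hw, hr⟩ := rep_form ss s hs hss c' hc'
  obtain ⟨r, hr', -⟩ := rep_cliff c hc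
  rw [← h] at hr
  have e : wordProd (([] : List (List Letter)).flatten) * c = c := by simp [wordProd]
  rw [e] at hr
  have := hr'.lt hr (vec_ne hs hw)
  omega

/-- Uniqueness for block sequences. -/
lemma unique_blocks (L : List (List Letter)) : ∀ (L' : List (List Letter)) (c c' : GL (Fin 3) ℂ),
    c ∈ Cliff → c' ∈ Cliff → (∀ s ∈ L, s ∈ blocks) → (∀ s ∈ L.tail, s ∈ sylls) →
    (∀ s ∈ L', s ∈ blocks) → (∀ s ∈ L'.tail, s ∈ sylls) →
    wordProd L.flatten * c = wordProd L'.flatten * c' → L = L' ∧ c = c' := by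
  induction L with
  | nil =>
    intro L' c c' hc hc' _ _ h3 h4 h
    cases L' with
    | nil => exact ⟨rfl, mul_left_cancel h⟩
    | cons s ss => exact (nil_cons (h3 s (by simp)) h4 hc hc' h).elim
  | cons a l ih =>
    intro L' c c' hc hc' h1 h2 h3 h4 h
    cases L' with
    | nil => exact (nil_cons (h1 a (by simp)) h2 hc' hc h.symm).elim
    | cons b l' =>
      have ha := h1 a (by simp)
      have hb := h3 b (by simp)
      obtain ⟨w, hw, hr⟩ := rep_form l a ha h2 c hc
      obtain ⟨w', hw', hr'⟩ := rep_form l' b hb h4 c' hc'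
      rw [← h] at hr'
      have l1 := hr.lt hr' (vec_ne hb hw')
      have l2 := hr'.lt hr (vec_ne ha hw)
      rw [le_antisymm l2 l1] at hr
      have hv := hr.unique hr'
      obtain ⟨j, hj⟩ := Function.ne_iff.mp hw
      have hab : a = b := by
        refine blocks_lead_inj a ha b hb (w j) (w' j) hj ?_
        intro i
        have := congrFun (congrFun hv i) j
        simpa [Matrix.vecMulVec_apply] using this
      subst hab
      rw [List.flatten_cons, List.flatten_cons, wordProd_append, wordProd_append, mul_assoc,
        mul_assoc] at h
      have h' := mul_left_cancel h
      obtain ⟨e1, e2⟩ := ih l' c c' hc hc' (fun s hs => h1 s (by simp [hs]))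
        (fun s hs => h2 s (List.mem_of_mem_tail hs)) (fun s hs => h3 s (by simp [hs]))
        (fun s hs => h4 s (List.mem_of_mem_tail hs)) h'
      exact ⟨by rw [e1], e2⟩

/-- Merge the prefix into the list of blocks. -/
def merge (p : List Letter) (ss : List (List Letter)) : List (List Letter) :=
  if p = [] then ss else p :: ss

lemma merge_flatten (p : List Letter) (ss : List (List Letter)) :
    (merge p ss).flatten = p ++ ss.flatten := by
  unfold merge; split_ifs with h <;> simp [h]

lemma merge_blocks {p : List Letter} {ss : List (List Letter)} (hp : p ∈ Prefixes)
    (hss : ∀ s ∈ ss, s ∈ sylls) :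
    (∀ s ∈ merge p ss, s ∈ blocks) ∧ (∀ s ∈ (merge p ss).tail, s ∈ sylls) := by
  unfold merge
  split_ifs with h
  · exact ⟨fun s hs => sylls_sub s (hss s hs), fun s hs => hss s (List.mem_of_mem_tail hs)⟩
  · refine ⟨?_, hss⟩
    intro s hs
    rcases List.mem_cons.mp hs with rfl | hs
    · rcases hp with rfl | rfl | rfl
      · exact absurd rfl h
      · decide
      · decide
    · exact sylls_sub s (hss s hs)

lemma pfx_not_syll {p : List Letter} (hp : p ∈ Prefixes) : p ∉ sylls := by
  rcases hp with rfl | rfl | rfl <;> decide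

/-- Distinct canonical forms represent distinct operators: if two
canonical forms (p, (s₁,…,s_k), c) and (p′, (s′₁,…,s′_m), c′) have equal products in
GL(3,ℂ), then p = p′, k = m, sᵢ = s′ᵢ for all i, and c = c′. -/
theorem canonical_forms_are_unique
    (p p' : List Letter) (ss ss' : List (List Letter)) (c c' : GL (Fin 3) ℂ)
    (hp : p ∈ Prefixes) (hss : ∀ s ∈ ss, s ∈ Syllables) (hc : c ∈ Cliff)
    (hp' : p' ∈ Prefixes) (hss' : ∀ s ∈ ss', s ∈ Syllables) (hc' : c' ∈ Cliff)
    (heq : wordProd (p ++ ss.flatten) * c = wordProd (p' ++ ss'.flatten) * c') :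
    p = p' ∧ ss = ss' ∧ c = c' := by
  have hss1 : ∀ s ∈ ss, s ∈ sylls := fun s hs => (mem_sylls s).1 (hss s hs)
  have hss2 : ∀ s ∈ ss', s ∈ sylls := fun s hs => (mem_sylls s).1 (hss' s hs)
  obtain ⟨m1, m2⟩ := merge_blocks hp hss1
  obtain ⟨m3, m4⟩ := merge_blocks hp' hss2
  obtain ⟨e, ec⟩ := unique_blocks (merge p ss) (merge p' ss') c c' hc hc' m1 m2 m3 m4
    (by rw [merge_flatten, merge_flatten]; exact heq)
  have key : p = p' ∧ ss = ss' := by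
    unfold merge at e
    split_ifs at e with h1 h2 h2
    · exact ⟨h1.trans h2.symm, e⟩
    · exact absurd (hss1 p' (by rw [e]; simp)) (pfx_not_syll hp')
    · exact absurd (hss2 p (by rw [← e]; simp)) (pfx_not_syll hp)
    · exact ⟨(List.cons.inj e).1, (List.cons.inj e).2⟩
  exact ⟨key.1, key.2, ec⟩

end
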